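/- Let k and m be positive integers with m ≤ k, m even, and let A be an intersecting collection of k-multisets on {1,…,m}. Then A contains at most half of the k-multisets in M_{(m/2)}, i.e., |A ∩ M_{(m/2)}| ≤ (1/2)·|M_{(m/2)}| = (1/2)·C(m, m/2)·C(k−1, k−m/2). -/

import Mathlib

/-!
The number of `k`-multisets with a prescribed support `S` depends only on the size of `S`: remove
one copy of each element of `S` and an arbitrary `(k - |S|)`-multiset on `S` remains. The supports
of an intersecting family of multisets on `m` points are themselves an
intersecting family of sets, so for supports of a fixed size `r ≤ m / 2` the Erdős–Ko–Rado theorem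
bounds their number by `C(m - 1, r - 1)`, which for `m = 2r` is half of `C(m, r)`.
-/

open Finset

theorem two_mul_choose_sub_one_half_sub_one {n : ℕ} (hn : 0 < n) (heven : Even n) :
    2 * (n - 1).choose (n / 2 - 1) = n.choose (n / 2) := by
  obtain ⟨r, rfl⟩ := heven.two_dvd
  obtain ⟨s, rfl⟩ : ∃ s, r = s + 1 := Nat.exists_eq_add_one.2 (by omega)
  rw [Nat.mul_div_cancel_left _ two_pos]
  change 2 * (2 * s + 1).choose s = (2 * s + 1 + 1).choose (s + 1)
  rw [Nat.choose_succ_succ, Nat.succ_eq_add_one, Nat.choose_symm_half, two_mul]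

section

variable {α : Type*} [DecidableEq α]

theorem card_finset_sym (S : Finset α) (n : ℕ) : #(S.sym n) = (#S).multichoose n := by
  have hmap := sym_map (n := n) (Function.Embedding.subtype (· ∈ S)) univ
  rw [univ_eq_attach, attach_map_val] at hmap
  rw [hmap, card_map, ← univ_eq_attach, sym_univ, card_univ, Sym.card_sym_eq_multichoose,
    Fintype.card_coe]

theorem intersecting_image_toFinset {k : ℕ} {A : Finset (Sym α k)}
    (hA : ∀ s ∈ A, ∀ t ∈ A, ∃ x, x ∈ s ∧ x ∈ t) :
    (A.image fun s : Sym α k => (s : Multiset α).toFinset : Set (Finset α)).Intersecting := by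
  simpa [Set.Intersecting, not_disjoint_iff] using hA

variable [Fintype α]

theorem filter_toFinset_eq_image_append (S : Finset α) (n : ℕ) :
    ({s | (s : Multiset α).toFinset = S} : Finset (Sym α (#S + n)))
      = (S.sym n).image fun t => (Sym.mk S.val rfl : Sym α #S).append t := by
  ext s
  rw [mem_filter_univ, mem_image]
  constructor
  · intro hs
    have hle : S.val ≤ (s : Multiset α) :=
      (Multiset.le_iff_subset S.nodup).2 fun a ha => Multiset.mem_toFinset.1 (hs.symm ▸ ha)
    have hcard : ((s : Multiset α) - S.val).card = n := by
      rw [Multiset.card_sub hle, Sym.card_coe, card_val, Nat.add_sub_cancel_left]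
    refine ⟨Sym.mk _ hcard, mem_sym_iff.2 fun a ha => ?_,
      Sym.coe_injective (add_tsub_cancel_of_le hle)⟩
    exact hs ▸ Multiset.mem_toFinset.2 (Multiset.mem_of_le (Multiset.sub_le_self _ _) ha)
  · rintro ⟨t, ht, rfl⟩
    ext a
    rw [Multiset.mem_toFinset, Sym.coe_append, Multiset.mem_add]
    exact or_iff_left_of_imp (mem_sym_iff.1 ht a)

theorem card_filter_toFinset_eq {k : ℕ} {S : Finset α} (hS : #S ≤ k) :
    #{s : Sym α k | (s : Multiset α).toFinset = S} = (k - 1).choose (k - #S) := by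
  obtain ⟨n, rfl⟩ := Nat.exists_eq_add_of_le hS
  rw [filter_toFinset_eq_image_append,
    card_image_of_injective _ fun _ _ => (Sym.append_inj_right _).1, card_finset_sym,
    Nat.multichoose_eq, Nat.add_sub_cancel_left]

theorem card_filter_toFinset_mem {k r : ℕ} (hrk : r ≤ k) {𝒮 : Finset (Finset α)}
    (h𝒮 : (𝒮 : Set (Finset α)).Sized r) :
    #{s : Sym α k | (s : Multiset α).toFinset ∈ 𝒮} = #𝒮 * (k - 1).choose (k - r) := by
  have hmaps : Set.MapsTo (fun s : Sym α k => (s : Multiset α).toFinset)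
      ({s : Sym α k | (s : Multiset α).toFinset ∈ 𝒮} : Finset (Sym α k)) 𝒮 :=
    fun s hs => (mem_filter_univ s).1 hs
  rw [card_eq_sum_card_fiberwise hmaps]
  refine sum_const_nat fun S hS => ?_
  obtain rfl : #S = r := h𝒮 hS
  rw [← card_filter_toFinset_eq hrk, filter_filter]
  exact congrArg card (filter_congr fun s _ => and_iff_right_of_imp fun hs => hs ▸ hS)

theorem card_filter_card_toFinset_eq {k r : ℕ} (hrk : r ≤ k) :
    #{s : Sym α k | #(s : Multiset α).toFinset = r}
      = (Fintype.card α).choose r * (k - 1).choose (k - r) := by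
  have h := card_filter_toFinset_mem (α := α) hrk (Set.sized_powersetCard univ r)
  simpa only [mem_powersetCard_univ, card_powersetCard, card_univ] using h

theorem erdos_ko_rado_fintype {𝒜 : Finset (Finset α)} {r : ℕ}
    (h𝒜 : (𝒜 : Set (Finset α)).Intersecting) (hsized : (𝒜 : Set (Finset α)).Sized r)
    (hr : r ≤ Fintype.card α / 2) :
    #𝒜 ≤ (Fintype.card α - 1).choose (r - 1) := by
  let e := Fintype.equivFin α
  rw [← card_map e.finsetCongr.toEmbedding]
  refine erdos_ko_rado ?_ ?_ hr <;> rw [coe_map]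
  · rintro _ ⟨S, hS, rfl⟩ _ ⟨T, hT, rfl⟩
    simpa using h𝒜 hS hT
  · rintro _ ⟨S, hS, rfl⟩
    simpa using hsized hS

theorem stmt_19_general {k r : ℕ} (hrk : r ≤ k) (hr : r ≤ Fintype.card α / 2)
    (A : Finset (Sym α k)) (hA : ∀ s ∈ A, ∀ t ∈ A, ∃ x, x ∈ s ∧ x ∈ t) :
    #(A ∩ ({s | #(s : Multiset α).toFinset = r} : Finset (Sym α k)))
        ≤ (Fintype.card α - 1).choose (r - 1) * (k - 1).choose (k - r) ∧
      #{s : Sym α k | #(s : Multiset α).toFinset = r}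
        = (Fintype.card α).choose r * (k - 1).choose (k - r) := by
  refine ⟨?_, card_filter_card_toFinset_eq hrk⟩
  set B := A ∩ ({s | #(s : Multiset α).toFinset = r} : Finset (Sym α k))
  set 𝒮 := B.image fun s : Sym α k => (s : Multiset α).toFinset
  have h𝒮_sized : (𝒮 : Set (Finset α)).Sized r := by
    intro S hS
    obtain ⟨s, hs, rfl⟩ := mem_image.1 hS
    exact (mem_filter_univ s).1 (mem_of_mem_inter_right hs)
  have h𝒮_inter : (𝒮 : Set (Finset α)).Intersecting :=
    intersecting_image_toFinset fun s hs t ht =>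
      hA s (mem_of_mem_inter_left hs) t (mem_of_mem_inter_left ht)
  calc #B ≤ #{s : Sym α k | (s : Multiset α).toFinset ∈ 𝒮} :=
        card_le_card fun s hs => (mem_filter_univ s).2 (mem_image_of_mem _ hs)
    _ = #𝒮 * (k - 1).choose (k - r) := card_filter_toFinset_mem hrk h𝒮_sized
    _ ≤ (Fintype.card α - 1).choose (r - 1) * (k - 1).choose (k - r) :=
        Nat.mul_le_mul_right _ (erdos_ko_rado_fintype h𝒮_inter h𝒮_sized hr)

end

/-- For `m ≤ k` with `m` even, an intersecting collection `A` of `k`-multisets on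
`{1,…,m}` contains at most half of the multisets in `M_{(m/2)}`:
`|A ∩ M_{(m/2)}| ≤ (1/2)·|M_{(m/2)}| = (1/2)·C(m, m/2)·C(k-1, k-m/2)`
(stated multiplied through by 2). -/
theorem stmt_19 (k m : ℕ) (hk : 0 < k) (hm : 0 < m) (hmk : m ≤ k) (heven : Even m)
    (A : Finset (Sym (Fin m) k))
    (hint : ∀ s ∈ A, ∀ t ∈ A, ∃ x : Fin m, x ∈ s ∧ x ∈ t) :
    2 * (A ∩ Finset.univ.filter
        (fun s : Sym (Fin m) k => (s : Multiset (Fin m)).toFinset.card = m / 2)).card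
      ≤ (Finset.univ.filter
        (fun s : Sym (Fin m) k => (s : Multiset (Fin m)).toFinset.card = m / 2)).card ∧
    (Finset.univ.filter
        (fun s : Sym (Fin m) k => (s : Multiset (Fin m)).toFinset.card = m / 2)).card
      = m.choose (m / 2) * (k - 1).choose (k - m / 2) := by
  obtain ⟨hle, hcard⟩ := stmt_19_general (r := m / 2) (by omega) (by rw [Fintype.card_fin]) A hint
  rw [Fintype.card_fin] at hle hcard
  refine ⟨?_, hcard⟩
  rw [hcard, ← two_mul_choose_sub_one_half_sub_one hm heven, mul_assoc]
  exact Nat.mul_le_mul_left 2 hle
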